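/- arXiv:2306.00675 — 3 statements merged into one kernel-verified Lean document; each statement's English description precedes it below -/
import Mathlib

section
/- Let E be a real inner product space, N ≥ 1 a number of tasks, and for each task b let n_b ≥ 1 data points x_b^1, …, x_b^{n_b} ∈ E be given, together with r_b ∈ E and dual variables α_b ∈ ℝ^{n_b}. Let λ1, λ2 ≥ 0 with λ1 + λ2 > 0 and let L : ℝ → ℝ be a loss function such that for every b and i the set {(−α_b^i)·y − L(y) : y ∈ ℝ} is bounded above, so that L*(−α_b^i) := sup_{y ∈ ℝ} ((−α_b^i)·y − L(y)) is a real number. Then the Lagrangian dual function D(α), defined as the infimum over all weights w_1, …, w_N ∈ E and all outputs y_b^i ∈ ℝ of (1/N)·Σ_{b=1}^N [ (1/n_b)·Σ_{i=1}^{n_b} ( L(y_b^i) + α_b^i·(y_b^i − ⟨w_b, x_b^i⟩) ) + (λ1/2)·‖w_b‖² + (λ2/2)·‖w_b − r_b‖² ], satisfies D(α) = (1/N)·Σ_{b=1}^N D_b(α_b), where D_b(α_b) := (1/n_b)·Σ_{i=1}^{n_b} (−L*(−α_b^i)) + (λ2/2)·‖r_b‖² − ‖λ2·r_b + A_b α_b‖²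 / (2(λ1+λ2)) and A_b α_b := (1/n_b)·Σ_{i=1}^{n_b} α_b^i · x_b^i. Moreover, for each b the infimum over w_b is attained at w_b = (λ2·r_b + A_b α_b)/(λ1+λ2). -/
/-!
The Lagrangian separates: after expanding, the variables `y_b^i` enter only through
`L (y_b^i) + α_b^i y_b^i`, whose infimum is `-L*(-α_b^i)`, and `w_b` enters only through a
quadratic which `quad_eq_square` puts in completed-square form, so that its minimum and its
minimizer can be read off. Hence the Lagrangian is bounded below by the claimed value, and taking
the minimizing `w_b` together with `ε`-optimal `y_b^i` bounds the infimum above by that value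
plus `ε`, because averages with total weight one turn a uniform error `ε` into an error `ε`.
-/

open RealInnerProductSpace

/-- Completing the square in `w`; the vector `A` stands for `A_b α_b`. -/
theorem quad_eq_square {E : Type*} [NormedAddCommGroup E] [InnerProductSpace ℝ E]
    (l1 l2 : ℝ) (hl : 0 < l1 + l2) (r A w : E) :
    (l1 / 2) * ‖w‖ ^ 2 + (l2 / 2) * ‖w - r‖ ^ 2 - ⟪w, A⟫ =
      (l2 / 2) * ‖r‖ ^ 2 - ‖l2 • r + A‖ ^ 2 / (2 * (l1 + l2)) +
        ((l1 + l2) / 2) * ‖w - (l1 + l2)⁻¹ • (l2 • r + A)‖ ^ 2 := by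
  have hc : l1 + l2 ≠ 0 := hl.ne'
  have h1 := norm_sub_sq_real w r
  have h2 := norm_sub_sq_real w ((l1 + l2)⁻¹ • (l2 • r + A))
  rw [norm_smul, mul_pow, Real.norm_eq_abs, sq_abs, real_inner_smul_right, inner_add_right,
    real_inner_smul_right] at h2
  rw [h1, h2]
  field_simp
  ring

theorem weighted_inner_sum {E : Type*} [NormedAddCommGroup E] [InnerProductSpace ℝ E]
    {m : ℕ} (a : Fin m → ℝ) (x : Fin m → E) (w : E) :
    (1 / (m : ℝ)) * ∑ i, a i * ⟪w, x i⟫ = ⟪w, (m : ℝ)⁻¹ • ∑ i, a i • x i⟫ := by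
  simp only [real_inner_smul_right, inner_sum, one_div]

/-- The Lagrangian of one task, split into its `y`-part and its completed square in `w`. -/
theorem task_lagrangian_eq {E : Type*} [NormedAddCommGroup E] [InnerProductSpace ℝ E]
    {m : ℕ} (a : Fin m → ℝ) (x : Fin m → E) (r w : E) (l1 l2 : ℝ) (hl : 0 < l1 + l2)
    (L : ℝ → ℝ) (y : Fin m → ℝ) :
    (1 / (m : ℝ)) * ∑ i, (L (y i) + a i * (y i - ⟪w, x i⟫)) +
        (l1 / 2) * ‖w‖ ^ 2 + (l2 / 2) * ‖w - r‖ ^ 2 =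
      (1 / (m : ℝ)) * ∑ i, (L (y i) + a i * y i) + (l2 / 2) * ‖r‖ ^ 2 -
        ‖l2 • r + (m : ℝ)⁻¹ • ∑ i, a i • x i‖ ^ 2 / (2 * (l1 + l2)) +
        ((l1 + l2) / 2) *
          ‖w - (l1 + l2)⁻¹ • (l2 • r + (m : ℝ)⁻¹ • ∑ i, a i • x i)‖ ^ 2 := by
  have hq := quad_eq_square l1 l2 hl r ((m : ℝ)⁻¹ • ∑ i, a i • x i) w
  rw [← weighted_inner_sum] at hq
  have hs : ∑ i, (L (y i) + a i * (y i - ⟪w, x i⟫)) =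
      ∑ i, (L (y i) + a i * y i) - ∑ i, a i * ⟪w, x i⟫ := by
    rw [← Finset.sum_sub_distrib]
    exact Finset.sum_congr rfl fun i _ => by ring
  rw [hs, mul_sub]
  linarith

theorem average_add_le {m : ℕ} (hm : 1 ≤ m) (f g : Fin m → ℝ) (ε : ℝ)
    (h : ∀ i, f i ≤ g i + ε) :
    (1 / (m : ℝ)) * ∑ i, f i ≤ (1 / (m : ℝ)) * ∑ i, g i + ε := by
  have hm' : (0 : ℝ) < m := by exact_mod_cast hm
  calc (1 / (m : ℝ)) * ∑ i, f i ≤ (1 / (m : ℝ)) * ∑ i, (g i + ε) := by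
        gcongr with i; exact h i
    _ = (1 / (m : ℝ)) * ∑ i, g i + ε := by
        rw [Finset.sum_add_distrib, Finset.sum_const, Finset.card_univ, Fintype.card_fin,
          nsmul_eq_mul]
        field_simp

/-- Lemma 1 of the paper: the Lagrangian dual function `D(α)`, the infimum of the
Lagrangian over all weights `w_b` and outputs `y_b^i`, decomposes as the average over
tasks `b` of the per-task dual functions `D_b(α_b)`; moreover for each task `b` the
infimum over `w_b` is attained at `w_b = (λ2 • r_b + A_b α_b)/(λ1 + λ2)`. -/
theorem stmt_0 {E : Type*} [NormedAddCommGroup E] [InnerProductSpace ℝ E]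
    (N : ℕ) (hN : 1 ≤ N) (n : Fin N → ℕ) (hn : ∀ b, 1 ≤ n b)
    (x : (b : Fin N) → Fin (n b) → E) (r : Fin N → E)
    (α : (b : Fin N) → Fin (n b) → ℝ)
    (l1 l2 : ℝ) (hl1 : 0 ≤ l1) (hl2 : 0 ≤ l2) (hl : 0 < l1 + l2)
    (L : ℝ → ℝ)
    (hL : ∀ (b : Fin N) (i : Fin (n b)),
      BddAbove (Set.range fun y : ℝ => (-(α b i)) * y - L y)) :
    (sInf { v : ℝ |
        ∃ (w : Fin N → E) (Y : (b : Fin N) → Fin (n b) → ℝ),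
          v = (1 / N) * ∑ b,
              ((1 / (n b : ℝ)) * ∑ i, (L (Y b i) + α b i * (Y b i - ⟪w b, x b i⟫)) +
                (l1 / 2) * ‖w b‖ ^ 2 + (l2 / 2) * ‖w b - r b‖ ^ 2) } =
      (1 / N) * ∑ b,
        ((1 / (n b : ℝ)) * ∑ i, (-(sSup (Set.range fun y : ℝ => (-(α b i)) * y - L y))) +
          (l2 / 2) * ‖r b‖ ^ 2 -
          ‖l2 • r b + (n b : ℝ)⁻¹ • ∑ i, α b i • x b i‖ ^ 2 / (2 * (l1 + l2)))) ∧
    ∀ b : Fin N, ∀ w : E,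
      (l1 / 2) * ‖(l1 + l2)⁻¹ • (l2 • r b + (n b : ℝ)⁻¹ • ∑ i, α b i • x b i)‖ ^ 2 +
          (l2 / 2) * ‖(l1 + l2)⁻¹ • (l2 • r b + (n b : ℝ)⁻¹ • ∑ i, α b i • x b i) - r b‖ ^ 2 -
          (1 / (n b : ℝ)) * ∑ i, α b i *
            ⟪(l1 + l2)⁻¹ • (l2 • r b + (n b : ℝ)⁻¹ • ∑ i, α b i • x b i), x b i⟫ ≤
        (l1 / 2) * ‖w‖ ^ 2 + (l2 / 2) * ‖w - r b‖ ^ 2 -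
          (1 / (n b : ℝ)) * ∑ i, α b i * ⟪w, x b i⟫ := by
  refine ⟨?_, ?_⟩
  · simp only [task_lagrangian_eq _ _ _ _ l1 l2 hl]
    refine IsGLB.csInf_eq ⟨?_, ?_⟩ ⟨_, fun _ => 0, fun _ _ => 0, rfl⟩
    · rintro v ⟨w, Y, rfl⟩
      gcongr with b _
      refine le_add_of_le_of_nonneg ?_ (by positivity)
      gcongr with i _
      have := le_csSup (hL b i) ⟨Y b i, rfl⟩
      dsimp only at this
      linarith
    · intro v hv
      refine le_of_forall_pos_le_add fun ε hε => ?_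
      have hy : ∀ (b : Fin N) (i : Fin (n b)), ∃ y : ℝ,
          L y + α b i * y ≤ -(sSup (Set.range fun y : ℝ => (-(α b i)) * y - L y)) + ε := by
        intro b i
        obtain ⟨_, ⟨y, rfl⟩, h⟩ := exists_lt_of_lt_csSup
          (Set.range_nonempty fun y : ℝ => (-(α b i)) * y - L y) (sub_lt_self _ hε)
        exact ⟨y, by dsimp only at h; linarith⟩
      choose Y hY using hy
      refine (hv ⟨fun b => (l1 + l2)⁻¹ • (l2 • r b + (n b : ℝ)⁻¹ • ∑ i, α b i • x b i), Y,
        rfl⟩).trans ?_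
      refine average_add_le hN _ _ ε fun b => ?_
      have h := average_add_le (hn b) _ _ ε (hY b)
      simp only [sub_self, norm_zero]
      linarith
  · intro b w
    rw [weighted_inner_sum, weighted_inner_sum, quad_eq_square l1 l2 hl,
      quad_eq_square l1 l2 hl _ _ w, sub_self, norm_zero]
    gcongr
    positivity
end

section
/- Let E be a real inner product space, n ≥ 1, x_1, …, x_n ∈ E, r ∈ E, λ1, λ2 ≥ 0 with λ1 + λ2 > 0, α ∈ ℝⁿ, and let L : ℝ → ℝ be such that for every i the set {(−α_i)·y − L(y) : y ∈ ℝ} is bounded above, so that L*(−α_i) := sup_{y ∈ ℝ} ((−α_i)·y − L(y)) is a real number. Then weak duality holds: for every w ∈ E, (1/n)·Σ_{i=1}^n (−L*(−α_i)) + (λ2/2)·‖r‖² − ‖λ2·r + (1/n)·Σ_{i=1}^n α_i·x_i‖² / (2(λ1+λ2)) ≤ (1/n)·Σ_{i=1}^n L(⟨w, x_i⟩) + (λ1/2)·‖w‖² + (λ2/2)·‖w − r‖². -/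
/-! The Fenchel–Young inequality `-L*(-αᵢ) ≤ L ⟪w, xᵢ⟫ + αᵢ ⟪w, xᵢ⟫`, averaged over `i`, bounds the
conjugate terms by the primal loss plus `⟪w, A⟫`, where `A = n⁻¹ ∑ αᵢ xᵢ`. After expanding
`‖w - r‖²`, what remains is Young's inequality `⟪w, v⟫ ≤ c/2 ‖w‖² + ‖v‖²/(2c)` for
`v = l2 r + A` and `c = l1 + l2`. -/

open RealInnerProductSpace

theorem inner_le_young {E : Type*} [NormedAddCommGroup E] [InnerProductSpace ℝ E]
    (w v : E) {c : ℝ} (hc : 0 < c) :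
    ⟪w, v⟫ ≤ c / 2 * ‖w‖ ^ 2 + ‖v‖ ^ 2 / (2 * c) := by
  have h1 := real_inner_le_norm w v
  have h2 : c / 2 * ‖w‖ ^ 2 + ‖v‖ ^ 2 / (2 * c) - ‖w‖ * ‖v‖
      = (c * ‖w‖ - ‖v‖) ^ 2 / (2 * c) := by
    field_simp
    ring
  have h3 : 0 ≤ (c * ‖w‖ - ‖v‖) ^ 2 / (2 * c) := by positivity
  linarith

/-- Weak duality between the per-task dual function `D_b` and the per-task primal objective:
for every weight `w`, the dual value at `α` is at most the primal value at `w`. -/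
theorem stmt_2 {E : Type*} [NormedAddCommGroup E] [InnerProductSpace ℝ E]
    (n : ℕ) (hn : 1 ≤ n) (x : Fin n → E) (r : E)
    (l1 l2 : ℝ) (hl1 : 0 ≤ l1) (hl2 : 0 ≤ l2) (hl : 0 < l1 + l2)
    (α : Fin n → ℝ) (L : ℝ → ℝ)
    (hL : ∀ i : Fin n, BddAbove (Set.range fun y : ℝ => (-(α i)) * y - L y)) :
    ∀ w : E,
      (1 / n) * ∑ i, (-(sSup (Set.range fun y : ℝ => (-(α i)) * y - L y))) +
          (l2 / 2) * ‖r‖ ^ 2 -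
          ‖l2 • r + (n : ℝ)⁻¹ • ∑ i, α i • x i‖ ^ 2 / (2 * (l1 + l2)) ≤
        (1 / n) * ∑ i, L ⟪w, x i⟫ + (l1 / 2) * ‖w‖ ^ 2 + (l2 / 2) * ‖w - r‖ ^ 2 := by
  intro w
  have hsum : ∑ i, (-(sSup (Set.range fun y : ℝ => (-(α i)) * y - L y))) ≤
      ∑ i, L ⟪w, x i⟫ + ∑ i, α i * ⟪w, x i⟫ := by
    rw [← Finset.sum_add_distrib]
    refine Finset.sum_le_sum fun i _ => ?_
    have h : (-(α i)) * ⟪w, x i⟫ - L ⟪w, x i⟫ ≤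
        sSup (Set.range fun y : ℝ => (-(α i)) * y - L y) :=
      le_csSup (hL i) ⟨⟪w, x i⟫, rfl⟩
    linarith
  have hmul := mul_le_mul_of_nonneg_left hsum (by positivity : (0 : ℝ) ≤ 1 / n)
  have hyoung := inner_le_young w (l2 • r + (n : ℝ)⁻¹ • ∑ i, α i • x i) hl
  have hinner : ⟪w, l2 • r + (n : ℝ)⁻¹ • ∑ i, α i • x i⟫ =
      l2 * ⟪w, r⟫ + 1 / n * ∑ i, α i * ⟪w, x i⟫ := by
    simp only [inner_add_right, inner_smul_right, inner_sum, one_div]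
  rw [hinner] at hyoung
  rw [norm_sub_sq_real]
  linarith
end

section
/- Let E be a real inner product space, f : E → ℝ, and α, α* ∈ E. Let γ, λ, σ be positive reals and n > 0. Assume: (i) for every η ∈ [0,1], f(η·α* + (1−η)·α) ≥ η·f(α*) + (1−η)·f(α) + (γ/(2n))·η·(1−η)·‖α* − α‖²; and (ii) there is a real S such that S ≥ f(w) − f(α) − (σ/(2·λ·n²))·‖w − α‖² for every w ∈ E. Then S ≥ η₀·( f(α*) − f(α) ), where η₀ := λ·n·γ / (λ·n·γ + σ). -/
/-!
Apply the lower bound on `S` at the point `w = η α* + (1 - η) α`, whose distance to `α` is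
`η ‖α* - α‖`, and bound `f w` below by strong concavity. With `η = λ n γ / (λ n γ + σ)` the two
quadratic terms in `‖α* - α‖` cancel, leaving `η (f α* - f α)`.
-/

/-- Abstract form of inequality (eq:efinal): combining strong concavity of `f` along the
segment from `α` to `α*` with a quadratic lower bound `S` on the total duality gap yields
`S ≥ η₀ * (f α* - f α)` with `η₀ = λ n γ / (λ n γ + σ)`. -/
theorem stmt_7 {E : Type*} [NormedAddCommGroup E] [InnerProductSpace ℝ E]
    (f : E → ℝ) (α αstar : E) (γ lam σ n S : ℝ)
    (hγ : 0 < γ) (hlam : 0 < lam) (hσ : 0 < σ) (hn : 0 < n)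
    (hconc : ∀ η ∈ Set.Icc (0 : ℝ) 1,
      f (η • αstar + (1 - η) • α) ≥
        η * f αstar + (1 - η) * f α + (γ / (2 * n)) * η * (1 - η) * ‖αstar - α‖ ^ 2)
    (hS : ∀ w : E, S ≥ f w - f α - (σ / (2 * lam * n ^ 2)) * ‖w - α‖ ^ 2) :
    S ≥ (lam * n * γ / (lam * n * γ + σ)) * (f αstar - f α) := by
  set η : ℝ := lam * n * γ / (lam * n * γ + σ) with hη
  have hD : 0 < lam * n * γ + σ := by positivity
  have hη0 : 0 ≤ η := by positivity
  have hη1 : η ≤ 1 := by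
    rw [hη, div_le_one hD]
    linarith
  have hnorm : ‖η • αstar + (1 - η) • α - α‖ ^ 2 = η ^ 2 * ‖αstar - α‖ ^ 2 := by
    have h : η • αstar + (1 - η) • α - α = η • (αstar - α) := by module
    rw [h, norm_smul, mul_pow, Real.norm_eq_abs, sq_abs]
  -- `η` is exactly the step size at which the strong concavity gain offsets the quadratic loss.
  have hbal : γ / (2 * n) * η * (1 - η) = σ / (2 * lam * n ^ 2) * η ^ 2 := by
    rw [hη]
    field_simp
    ring
  have h1 := hconc η ⟨hη0, hη1⟩
  have h2 := hS (η • αstar + (1 - η) • α)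
  rw [hnorm, ← mul_assoc, ← hbal] at h2
  linarith
end
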